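/- Let α be a transition rate function on [d] in (D-Lip). Suppose there is L > 0 such that α_{xy}(μ) ≥ L for all x ≠ y ∈ [d] and all μ ∈ S_d, and that the Lipschitz constant K of α (with respect to the ℓ¹ norm, componentwise) satisfies K < L/d. Then α satisfies (Erg); in particular the associated nonlinear Markov chain is exponentially ergodic. -/

import Mathlib

/-!
The lower bound on the rates makes the Kolmogorov equation dissipative in ℓ¹. On zero-sum vectors
a rate matrix `A` with off-diagonal entries at least `L` acts like `A - L J`, where `J` is the
all-ones matrix, and this contracts the ℓ¹ norm at rate `d L`. A perturbation bounded by `d K |q|`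
leaves the rate `d (L - K)`, which is positive because `K < L / d ≤ L`; this is
`l1_le_of_dissipative`, proved with a Gronwall inequality for Dini derivatives. Applied to the
difference of two trajectories, it gives the exponential contraction `flow_contraction`.

For the derivative in the initial condition, consider the difference quotients
`p^ε(t, μ) = (m(t, (1 - ε) μ + ε δ_z) - m(t, μ)) / ε`. They solve the linearized equation up to an
error of order `ε`. That equation is dissipative with the same rate, because the derivative of `α`
is bounded by `K` on zero-sum directions (`abs_deriv_le_of_lipschitz`). Hence
`|p^ε(t, μ) - p^ε'(t, μ')| ≤ C (|μ - μ'| + ε + ε')` uniformly in time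
(`exists_flowQuotient_bound`). With `μ = μ'` this shows that the quotients are Cauchy as `ε → 0`, so
that the derivative exists; the limit `ε = ε' → 0` shows that it is Lipschitz in `μ`.

The error estimate rests on a first-order expansion of functions in (D-Lip) with uniform quadratic
remainder
(`exists_taylor`). The linear functional derivative only controls one-sided increments towards the
vertices of the simplex. Extending `F` to the positive cone by homogeneity of degree zero turns
these into right partial derivatives along the coordinate axes, to which a mean value inequality
applies one coordinate at a time.
-/

open Finset Filter Topology

/-- The simplex of probability vectors on `Fin d`. -/
def simplex (d : ℕ) : Set (Fin d → ℝ) :=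
  {μ | (∀ z, 0 ≤ μ z) ∧ ∑ z, μ z = 1}

/-- The ℓ¹ norm on `Fin d → ℝ`. -/
def l1 {d : ℕ} (v : Fin d → ℝ) : ℝ := ∑ z, |v z|

/-- The `z`-th standard basis vector (Dirac measure at `z`). -/
def bvec {d : ℕ} (z : Fin d) : Fin d → ℝ := fun y => if y = z then 1 else 0

/-- Linear functional derivative: `δF/δm (μ, z) = v`. -/
def HasLFDerivAt {d : ℕ} (F : (Fin d → ℝ) → ℝ) (μ : Fin d → ℝ) (z : Fin d) (v : ℝ) : Prop :=
  Filter.Tendsto (fun ε : ℝ => (F ((1 - ε) • μ + ε • bvec z) - F μ) / ε)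
    (nhdsWithin 0 (Set.Ioi 0)) (nhds v)

/-- Directional derivative `D^m_{yz} F (μ) = v`. -/
def HasDmDerivAt {d : ℕ} (F : (Fin d → ℝ) → ℝ) (μ : Fin d → ℝ) (y z : Fin d) (v : ℝ) : Prop :=
  Filter.Tendsto (fun ε : ℝ => (F (μ + ε • (bvec z - bvec y)) - F μ) / ε)
    (nhdsWithin 0 (Set.Ioi 0)) (nhds v)

/-- `α` is a transition rate function on `[d]`. -/
def IsRate (d : ℕ) (α : (Fin d → ℝ) → Matrix (Fin d) (Fin d) ℝ) : Prop :=
  ContinuousOn α (simplex d) ∧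
  (∀ μ ∈ simplex d, ∀ x y, x ≠ y → 0 ≤ α μ x y) ∧
  (∀ μ ∈ simplex d, ∀ x, ∑ y, α μ x y = 0)

/-- `m` is the measure flow solving the nonlinear Kolmogorov equation for `α`. -/
def IsFlow {d : ℕ} (α : (Fin d → ℝ) → Matrix (Fin d) (Fin d) ℝ)
    (m : ℝ → (Fin d → ℝ) → Fin d → ℝ) : Prop :=
  ∀ μ ∈ simplex d, m 0 μ = μ ∧ (∀ t, 0 ≤ t → m t μ ∈ simplex d) ∧
    ∀ t, 0 ≤ t → HasDerivAt (fun s => m s μ) (Matrix.vecMul (m t μ) (α (m t μ))) t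

/-- A real-valued function on the simplex is in (D-Lip) with linear functional derivative `δF`. -/
def DLipR {d : ℕ} (F : (Fin d → ℝ) → ℝ) (δF : (Fin d → ℝ) → Fin d → ℝ) : Prop :=
  (∃ K : ℝ, ∀ μ ∈ simplex d, ∀ ν ∈ simplex d, |F μ - F ν| ≤ K * l1 (μ - ν)) ∧
  (∀ μ ∈ simplex d, ∀ z, HasLFDerivAt F μ z (δF μ z)) ∧
  (∃ K : ℝ, ∀ μ ∈ simplex d, ∀ ν ∈ simplex d, l1 (δF μ - δF ν) ≤ K * l1 (μ - ν))

/-- The matrix-valued transition rate function is in (D-Lip), componentwise. -/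
def DLipRate {d : ℕ} (α : (Fin d → ℝ) → Matrix (Fin d) (Fin d) ℝ)
    (δα : (Fin d → ℝ) → Fin d → Matrix (Fin d) (Fin d) ℝ) : Prop :=
  ∀ x y, DLipR (fun μ => α μ x y) (fun μ z => δα μ z x y)

/-- The ergodicity assumption (Erg) for the flow `m`, with derivative data `δm`. -/
def Erg {d : ℕ} (m : ℝ → (Fin d → ℝ) → Fin d → ℝ)
    (δm : ℝ → (Fin d → ℝ) → Fin d → Fin d → ℝ) (lam c₁ k₁ : ℝ) : Prop :=
  0 < lam ∧ 0 < c₁ ∧ 0 < k₁ ∧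
  (∀ t, 0 ≤ t → ∀ μ ∈ simplex d, ∀ μ' ∈ simplex d,
    l1 (m t μ - m t μ') ≤ c₁ * Real.exp (-lam * t) * l1 (μ - μ')) ∧
  (∀ t, 0 ≤ t → ∀ μ ∈ simplex d, ∀ z x, HasLFDerivAt (fun ν => m t ν x) μ z (δm t μ z x)) ∧
  (∀ t, 0 ≤ t → ∀ μ ∈ simplex d, ∀ μ' ∈ simplex d, ∀ z,
    l1 (δm t μ z - δm t μ' z) ≤ k₁ * l1 (μ - μ'))

/-- Empirical measure of a configuration of `N` particles. -/
noncomputable def empMeas {d N : ℕ} (x : Fin N → Fin d) : Fin d → ℝ :=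
  fun z => (∑ i, if x i = z then (1 : ℝ) else 0) / N

/-- Generator of the `N`-particle Markov chain. -/
noncomputable def genQ {d N : ℕ} (α : (Fin d → ℝ) → Matrix (Fin d) (Fin d) ℝ)
    (F : (Fin N → Fin d) → ℝ) (x : Fin N → Fin d) : ℝ :=
  ∑ i, ∑ y ∈ Finset.univ.filter (fun y => y ≠ x i),
    α (empMeas x) (x i) y * (F (Function.update x i y) - F x)

/-- `p` is the law of the `N`-particle chain: a curve of probability vectors solving the
forward Kolmogorov equation (in weak form, tested against all functions). -/
def IsLaw {d N : ℕ} (α : (Fin d → ℝ) → Matrix (Fin d) (Fin d) ℝ)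
    (p : ℝ → (Fin N → Fin d) → ℝ) : Prop :=
  (∀ t, 0 ≤ t → (∀ x, 0 ≤ p t x) ∧ (∑ x, p t x) = 1) ∧
  (∀ F : (Fin N → Fin d) → ℝ, ∀ t, 0 ≤ t →
    HasDerivAt (fun s => ∑ x, p s x * F x) (∑ x, p t x * genQ α F x) t)

/-- The linearized Kolmogorov operator `L_η`. -/
def linOp {d : ℕ} (α : (Fin d → ℝ) → Matrix (Fin d) (Fin d) ℝ)
    (δα : (Fin d → ℝ) → Fin d → Matrix (Fin d) (Fin d) ℝ)
    (η q : Fin d → ℝ) : Fin d → ℝ :=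
  Matrix.vecMul η (∑ z, q z • δα η z) + Matrix.vecMul q (α η)

/-- The linearized ergodicity assumption (Lin-Erg) with constants `lam`, `c₂`. -/
def LinErg {d : ℕ} (α : (Fin d → ℝ) → Matrix (Fin d) (Fin d) ℝ)
    (δα : (Fin d → ℝ) → Fin d → Matrix (Fin d) (Fin d) ℝ)
    (m : ℝ → (Fin d → ℝ) → Fin d → ℝ) (lam c₂ : ℝ) : Prop :=
  ∀ μ ∈ simplex d, ∀ q₀ : Fin d → ℝ, (∑ z, q₀ z) = 0 →
    ∀ r : ℝ → Fin d → ℝ, Measurable r → (∃ Cb : ℝ, ∀ t, 0 ≤ t → l1 (r t) ≤ Cb) →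
      (∀ t, 0 ≤ t → (∑ z, r t z) = 0) →
      ∀ q : ℝ → Fin d → ℝ, q 0 = q₀ →
        (∀ t, 0 ≤ t → HasDerivAt q (linOp α δα (m t μ) (q t) + r t) t) →
        ∀ t, 0 ≤ t →
          l1 (q t) ≤ c₂ * (Real.exp (-lam * t) * l1 q₀ +
            ∫ s in (0:ℝ)..t, Real.exp (-lam * (t - s)) * l1 (r s))

/-! ### The ℓ¹ norm -/

lemma l1_nonneg {d : ℕ} (v : Fin d → ℝ) : 0 ≤ l1 v :=
  Finset.sum_nonneg fun _ _ => abs_nonneg _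

lemma l1_add_le {d : ℕ} (v w : Fin d → ℝ) : l1 (v + w) ≤ l1 v + l1 w := by
  unfold l1
  rw [← Finset.sum_add_distrib]
  exact Finset.sum_le_sum fun z _ => abs_add_le _ _

lemma l1_smul {d : ℕ} (c : ℝ) (v : Fin d → ℝ) : l1 (c • v) = |c| * l1 v := by
  simp [l1, abs_mul, Finset.mul_sum]

lemma l1_neg {d : ℕ} (v : Fin d → ℝ) : l1 (-v) = l1 v := by
  simp [l1]

lemma l1_sub_comm {d : ℕ} (v w : Fin d → ℝ) : l1 (v - w) = l1 (w - v) := by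
  rw [← l1_neg, neg_sub]

lemma l1_sub_le {d : ℕ} (v w : Fin d → ℝ) : l1 (v - w) ≤ l1 v + l1 w := by
  rw [sub_eq_add_neg, ← l1_neg w]
  exact l1_add_le _ _

lemma abs_le_l1 {d : ℕ} (v : Fin d → ℝ) (z : Fin d) : |v z| ≤ l1 v :=
  Finset.single_le_sum (f := fun z => |v z|) (fun _ _ => abs_nonneg _) (Finset.mem_univ z)

lemma abs_sum_le_l1 {d : ℕ} (v : Fin d → ℝ) : |∑ z, v z| ≤ l1 v :=
  Finset.abs_sum_le_sum_abs _ _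

lemma abs_sum_mul_le_l1_mul_l1 {d : ℕ} (v w : Fin d → ℝ) :
    |∑ z, v z * w z| ≤ l1 v * l1 w := by
  refine (Finset.abs_sum_le_sum_abs _ _).trans ?_
  unfold l1
  rw [Finset.mul_sum]
  refine Finset.sum_le_sum fun z _ => ?_
  rw [abs_mul]
  exact mul_le_mul_of_nonneg_right (abs_le_l1 v z) (abs_nonneg _)

lemma continuous_l1 {d : ℕ} : Continuous (l1 : (Fin d → ℝ) → ℝ) := by
  unfold l1
  fun_prop

lemma l1_le_norm {d : ℕ} (v : Fin d → ℝ) : l1 v ≤ d * ‖v‖ := by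
  calc l1 v ≤ ∑ _z : Fin d, ‖v‖ := Finset.sum_le_sum fun z _ => norm_le_pi_norm v z
    _ = d * ‖v‖ := by simp

lemma l1_eq_one {d : ℕ} {μ : Fin d → ℝ} (h : μ ∈ simplex d) : l1 μ = 1 := by
  rw [← h.2]
  exact Finset.sum_congr rfl fun z _ => abs_of_nonneg (h.1 z)

lemma l1_sub_le_two {d : ℕ} {μ ν : Fin d → ℝ} (hμ : μ ∈ simplex d) (hν : ν ∈ simplex d) :
    l1 (μ - ν) ≤ 2 := by
  have := l1_sub_le μ ν
  rw [l1_eq_one hμ, l1_eq_one hν] at this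
  linarith

lemma bvec_mem {d : ℕ} (z : Fin d) : bvec z ∈ simplex d := by
  refine ⟨fun y => ?_, by simp [bvec]⟩
  unfold bvec
  split_ifs <;> norm_num

lemma mix_mem {d : ℕ} {μ ν : Fin d → ℝ} (hμ : μ ∈ simplex d) (hν : ν ∈ simplex d) {ε : ℝ}
    (h0 : 0 ≤ ε) (h1 : ε ≤ 1) : (1 - ε) • μ + ε • ν ∈ simplex d := by
  refine ⟨fun z => ?_, ?_⟩
  · have := hμ.1 z
    have := hν.1 z
    simp only [Pi.add_apply, Pi.smul_apply, smul_eq_mul]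
    have : 0 ≤ 1 - ε := by linarith
    positivity
  · simp only [Pi.add_apply, Pi.smul_apply, smul_eq_mul, Finset.sum_add_distrib,
      ← Finset.mul_sum, hμ.2, hν.2]
    ring

/-! ### Dissipativity of rate matrices -/

lemma l1_vecMul_le {d : ℕ} (v : Fin d → ℝ) (A : Matrix (Fin d) (Fin d) ℝ) {c : ℝ}
    (hA : ∀ x y, |A x y| ≤ c) : l1 (Matrix.vecMul v A) ≤ d * c * l1 v := by
  unfold l1
  calc ∑ y, |Matrix.vecMul v A y| ≤ ∑ y : Fin d, ∑ x, |v x| * c := by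
        refine Finset.sum_le_sum fun y _ => ?_
        simp only [Matrix.vecMul, dotProduct]
        refine (Finset.abs_sum_le_sum_abs _ _).trans (Finset.sum_le_sum fun x _ => ?_)
        rw [abs_mul]
        exact mul_le_mul_of_nonneg_left (hA x y) (abs_nonneg _)
    _ = d * c * ∑ x, |v x| := by
        rw [← Finset.sum_mul]
        simp
        ring

/-- On zero-sum vectors `q A + M q = q (A + M I - L J)` with `J` the all-ones matrix. For `M`
large the matrix on the right is entrywise nonnegative with row sums `M - d L`, which bounds its
ℓ¹ operator norm. -/
lemma l1_vecMul_shift_le {d : ℕ} (q : Fin d → ℝ) (A : Matrix (Fin d) (Fin d) ℝ) (L M : ℝ)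
    (hq : ∑ z, q z = 0) (hoff : ∀ x y, x ≠ y → L ≤ A x y) (hrow : ∀ x, ∑ y, A x y = 0)
    (hM : ∀ x, L ≤ A x x + M) :
    l1 (Matrix.vecMul q A + M • q) ≤ (M - d * L) * l1 q := by
  set B : Fin d → Fin d → ℝ := fun x y => A x y + (if x = y then M else 0) - L with hB
  have hB0 : ∀ x y, 0 ≤ B x y := by
    intro x y
    by_cases h : x = y
    · subst h
      simp only [hB, if_true]
      linarith [hM x]
    · simp only [hB, if_neg h]
      linarith [hoff x y h]
  have hBrow : ∀ x, ∑ y, B x y = M - d * L := by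
    intro x
    simp [hB, Finset.sum_sub_distrib, Finset.sum_add_distrib, hrow]
  have hEq : ∀ y, (Matrix.vecMul q A + M • q) y = ∑ x, q x * B x y := by
    intro y
    simp only [hB, Pi.add_apply, Pi.smul_apply, smul_eq_mul, Matrix.vecMul, dotProduct, mul_sub,
      mul_add, Finset.sum_sub_distrib, Finset.sum_add_distrib, ← Finset.sum_mul, hq, mul_ite,
      mul_zero, Finset.sum_ite_eq', Finset.mem_univ, if_true]
    ring
  calc l1 (Matrix.vecMul q A + M • q) = ∑ y, |∑ x, q x * B x y| := by
        unfold l1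
        simp only [hEq]
    _ ≤ ∑ y, ∑ x, |q x| * B x y := by
        refine Finset.sum_le_sum fun y _ => (Finset.abs_sum_le_sum_abs _ _).trans ?_
        refine Finset.sum_le_sum fun x _ => ?_
        rw [abs_mul, abs_of_nonneg (hB0 x y)]
    _ = (M - d * L) * l1 q := by
        rw [Finset.sum_comm]
        simp only [← Finset.mul_sum, hBrow]
        rw [← Finset.sum_mul]
        unfold l1
        ring

/-- A bound on the upper right Dini derivative of `t ↦ l1 (q t)` when `q' = -M q + b`. -/
lemma l1_slope_lt {d : ℕ} {q : ℝ → Fin d → ℝ} {v : Fin d → ℝ} {t M r : ℝ}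
    (hq : HasDerivAt q v t) (hr : -M * l1 (q t) + l1 (v + M • q t) < r) :
    ∀ᶠ s in 𝓝[>] t, (s - t)⁻¹ * (l1 (q s) - l1 (q t)) < r := by
  set c := (r - (-M * l1 (q t) + l1 (v + M • q t))) / (2 * (d + 1)) with hc
  have hd : (0 : ℝ) < 2 * (d + 1) := by positivity
  have hc0 : 0 < c := div_pos (by linarith) hd
  have hcd : c * (2 * (d + 1)) = r - (-M * l1 (q t) + l1 (v + M • q t)) := by
    rw [hc]
    field_simp
  have h1 := hq.isLittleO.def hc0
  have h1' := h1.filter_mono (nhdsWithin_le_nhds (s := Set.Ioi t))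
  have h2 : ∀ᶠ s in 𝓝[>] t, (s - t) * M < 1 := by
    have : Tendsto (fun s => (s - t) * M) (𝓝[>] t) (𝓝 ((t - t) * M)) :=
      ((by fun_prop : Continuous fun s : ℝ => (s - t) * M).tendsto t).mono_left nhdsWithin_le_nhds
    rw [sub_self, zero_mul] at this
    exact this.eventually (gt_mem_nhds one_pos)
  filter_upwards [h1', h2, self_mem_nhdsWithin] with s hs1 hs2 hs3
  have hst : 0 < s - t := sub_pos.2 hs3
  rw [inv_mul_lt_iff₀ hst]
  have hdec : q s = (q s - q t - (s - t) • v) + ((1 - (s - t) * M) • q t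
      + (s - t) • (v + M • q t)) := by
    ext z
    simp
    ring
  have e1 : l1 (q s - q t - (s - t) • v) ≤ d * (c * (s - t)) := by
    refine (l1_le_norm _).trans ?_
    rw [Real.norm_of_nonneg hst.le] at hs1
    gcongr
  have e2 : l1 (q s) ≤ l1 (q s - q t - (s - t) • v) + ((1 - (s - t) * M) * l1 (q t)
      + (s - t) * l1 (v + M • q t)) := by
    calc l1 (q s) = _ := congrArg l1 hdec
      _ ≤ _ := l1_add_le _ _
      _ ≤ _ := by
        gcongr
        refine (l1_add_le _ _).trans ?_
        rw [l1_smul, l1_smul, abs_of_pos hst, abs_of_pos (by linarith : 0 < 1 - (s - t) * M)]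
  have e3 : 0 < (s - t) * c := mul_pos hst hc0
  have e4 : (0 : ℝ) ≤ d * ((s - t) * c) := by positivity
  have e5 : (s - t) * r = 2 * (d * ((s - t) * c)) + 2 * ((s - t) * c)
      + (s - t) * (-M * l1 (q t) + l1 (v + M • q t)) := by
    rw [show r = c * (2 * (d + 1)) + (-M * l1 (q t) + l1 (v + M • q t)) by linarith]
    ring
  nlinarith

/-- Exponential stability of a linear equation `q' = q A(t) + w(t)` on zero-sum vectors, where the
off-diagonal rates of `A` are at least `L` and the perturbation `w` has size at most
`d K |q| + R`. -/
lemma l1_le_of_dissipative {d : ℕ} {q w : ℝ → Fin d → ℝ}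
    {A : ℝ → Matrix (Fin d) (Fin d) ℝ} {L K R : ℝ} (hd : 0 < d) (hKL : K < L) (hR : 0 ≤ R)
    (hder : ∀ t, 0 ≤ t → HasDerivAt q (Matrix.vecMul (q t) (A t) + w t) t)
    (hsum : ∀ t, 0 ≤ t → ∑ z, q t z = 0)
    (hoff : ∀ t, 0 ≤ t → ∀ x y, x ≠ y → L ≤ A t x y)
    (hrow : ∀ t, 0 ≤ t → ∀ x, ∑ y, A t x y = 0)
    (hw : ∀ t, 0 ≤ t → l1 (w t) ≤ d * K * l1 (q t) + R) (t : ℝ) (ht : 0 ≤ t) :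
    l1 (q t) ≤ Real.exp (-(d * (L - K)) * t) * l1 (q 0) + R / (d * (L - K)) := by
  have hlam : 0 < d * (L - K) := mul_pos (by exact_mod_cast hd) (by linarith)
  set lam := d * (L - K) with hlamdef
  have key := le_gronwallBound_of_liminf_deriv_right_le (f := fun s => l1 (q s))
    (f' := fun s => -lam * l1 (q s) + R) (δ := l1 (q 0)) (K := -lam) (ε := R) (a := 0) (b := t)
    (fun s hs => (continuous_l1.continuousAt.comp (hder s hs.1).continuousAt).continuousWithinAt)
    ?_ le_rfl (fun _ _ => le_rfl) t ⟨ht, le_rfl⟩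
  · rw [gronwallBound_of_K_ne_0 (by linarith)] at key
    simp only [sub_zero] at key
    have h1 : R / -lam * (Real.exp (-lam * t) - 1) ≤ R / lam := by
      have : R / -lam * (Real.exp (-lam * t) - 1) = R / lam - R / lam * Real.exp (-lam * t) := by
        rw [div_neg]
        ring
      rw [this]
      have : 0 ≤ R / lam * Real.exp (-lam * t) := by positivity
      linarith
    linarith [mul_comm (l1 (q 0)) (Real.exp (-lam * t))]
  · intro s hs r hr
    refine Eventually.frequently ?_
    -- Any `M` making the diagonal of `A s + M I - L J` nonnegative will do.
    set M := L + ∑ x, |A s x x| with hM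
    refine l1_slope_lt (M := M) (hder s hs.1) (lt_of_le_of_lt ?_ hr)
    have h1 := l1_vecMul_shift_le (q s) (A s) L M (hsum s hs.1) (hoff s hs.1) (hrow s hs.1) (by
      intro x
      have h2 := Finset.single_le_sum (f := fun x => |A s x x|) (fun _ _ => abs_nonneg _)
        (Finset.mem_univ x)
      have h3 := neg_abs_le (A s x x)
      linarith)
    have h2 := hw s hs.1
    have h3 := l1_add_le (Matrix.vecMul (q s) (A s) + M • q s) (w s)
    rw [show Matrix.vecMul (q s) (A s) + w s + M • q s
      = Matrix.vecMul (q s) (A s) + M • q s + w s by abel]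
    rw [hlamdef]
    nlinarith

/-! ### First-order expansion of functions in (D-Lip) -/

/-- The rescaling of a nonzero nonnegative vector to a probability vector. -/
noncomputable def normalize1 {d : ℕ} (v : Fin d → ℝ) : Fin d → ℝ := (∑ z, v z)⁻¹ • v

lemma normalize1_mem {d : ℕ} {v : Fin d → ℝ} (h0 : ∀ z, 0 ≤ v z) (hV : 0 < ∑ z, v z) :
    normalize1 v ∈ simplex d := by
  refine ⟨fun z => mul_nonneg (inv_nonneg.2 hV.le) (h0 z), ?_⟩
  simp only [normalize1, Pi.smul_apply, smul_eq_mul, ← Finset.mul_sum]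
  exact inv_mul_cancel₀ hV.ne'

lemma normalize1_of_mem {d : ℕ} {μ : Fin d → ℝ} (h : μ ∈ simplex d) : normalize1 μ = μ := by
  simp [normalize1, h.2]

lemma sum_update {d : ℕ} (w : Fin d → ℝ) (z : Fin d) (s : ℝ) :
    ∑ y, Function.update w z s y = ∑ y, w y + (s - w z) := by
  rw [Finset.sum_update_of_mem (Finset.mem_univ z),
    Finset.sum_eq_add_sum_sdiff_singleton_of_mem (Finset.mem_univ z) w]
  ring

/-- Adding mass `y - s` at `z` and rescaling mixes in the Dirac mass at `z`. -/
lemma normalize1_update {d : ℕ} (w : Fin d → ℝ) (z : Fin d) {s y : ℝ}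
    (hV : 0 < ∑ x, Function.update w z s x) (hsy : s ≤ y) :
    normalize1 (Function.update w z y) =
      (1 - (y - s) / (∑ x, Function.update w z s x + (y - s))) •
        normalize1 (Function.update w z s) +
      ((y - s) / (∑ x, Function.update w z s x + (y - s))) • bvec z := by
  have hS : ∑ x, Function.update w z y x = ∑ x, Function.update w z s x + (y - s) := by
    rw [sum_update, sum_update]
    ring
  set V := ∑ x, Function.update w z s x with hVdef
  have hV' : 0 < V + (y - s) := by linarith
  ext x
  simp only [normalize1, hS, Pi.add_apply, Pi.smul_apply, smul_eq_mul, bvec, ← hVdef]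
  by_cases h : x = z
  · subst h
    simp only [Function.update_self, if_true]
    field_simp
    ring
  · simp only [Function.update_of_ne h, if_neg h]
    field_simp
    ring

/-- The right partial derivative in direction `z` of the degree-zero homogeneous extension of
`F`. -/
lemma hasDerivWithinAt_normalize1 {d : ℕ} {F : (Fin d → ℝ) → ℝ} {δF : (Fin d → ℝ) → Fin d → ℝ}
    (hF : DLipR F δF) (w : Fin d → ℝ) (z : Fin d) (s : ℝ)
    (h0 : ∀ x, 0 ≤ Function.update w z s x) (hV : 0 < ∑ x, Function.update w z s x) :
    HasDerivWithinAt (fun y => F (normalize1 (Function.update w z y)))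
      (δF (normalize1 (Function.update w z s)) z * (∑ x, Function.update w z s x)⁻¹)
      (Set.Ici s) s := by
  rw [← hasDerivWithinAt_Ioi_iff_Ici, hasDerivWithinAt_iff_tendsto_slope' (by simp)]
  have hL := hF.2.1 _ (normalize1_mem h0 hV) z
  unfold HasLFDerivAt at hL
  set η := normalize1 (Function.update w z s) with hη
  set V := ∑ x, Function.update w z s x with hVdef
  have hcont : ContinuousAt (fun y : ℝ => (V + (y - s))⁻¹) s := by
    refine ContinuousAt.inv₀ (by fun_prop) ?_
    simp [hV.ne']
  have hinv : Tendsto (fun y : ℝ => (V + (y - s))⁻¹) (𝓝[>] s) (𝓝 V⁻¹) := by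
    have := hcont.tendsto
    simp only [sub_self, add_zero] at this
    exact this.mono_left nhdsWithin_le_nhds
  have hεt : Tendsto (fun y : ℝ => (y - s) / (V + (y - s))) (𝓝[>] s) (𝓝[>] 0) := by
    refine tendsto_nhdsWithin_iff.2 ⟨?_, ?_⟩
    · have h1 : Tendsto (fun y : ℝ => y - s) (𝓝[>] s) (𝓝 0) := by
        have := ((by fun_prop : Continuous fun y : ℝ => y - s).tendsto s)
        rw [sub_self] at this
        exact this.mono_left nhdsWithin_le_nhds
      have := h1.mul hinv
      rw [zero_mul] at this
      exact this
    · filter_upwards [self_mem_nhdsWithin] with y hy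
      have : 0 < y - s := sub_pos.2 hy
      exact Set.mem_Ioi.2 (by positivity)
  refine ((hL.comp hεt).mul hinv).congr' ?_
  filter_upwards [self_mem_nhdsWithin] with y hy
  have hys : 0 < y - s := sub_pos.2 hy
  have hVy : 0 < V + (y - s) := by positivity
  rw [slope_def_field, normalize1_update w z hV (le_of_lt hy), ← hη, ← hVdef]
  simp only [Function.comp]
  field_simp

lemma continuousOn_of_l1_lipschitz {d : ℕ} {F : (Fin d → ℝ) → ℝ} {K : ℝ}
    (hK : ∀ μ ∈ simplex d, ∀ ν ∈ simplex d, |F μ - F ν| ≤ K * l1 (μ - ν)) :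
    ContinuousOn F (simplex d) := by
  intro μ hμ
  rw [ContinuousWithinAt, tendsto_iff_dist_tendsto_zero]
  have h : Tendsto (fun ν => K * l1 (ν - μ)) (𝓝[simplex d] μ) (𝓝 0) := by
    have hc : Continuous fun ν : Fin d → ℝ => K * l1 (ν - μ) :=
      continuous_const.mul (continuous_l1.comp (by fun_prop))
    have := hc.tendsto μ
    simp only [sub_self] at this
    rw [show l1 (0 : Fin d → ℝ) = 0 by simp [l1], mul_zero] at this
    exact this.mono_left nhdsWithin_le_nhds
  refine squeeze_zero' (Eventually.of_forall fun _ => dist_nonneg) ?_ h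
  filter_upwards [self_mem_nhdsWithin] with ν hν
  exact hK ν hν μ hμ

lemma exists_l1_bound {d : ℕ} {F : (Fin d → ℝ) → ℝ} {δF : (Fin d → ℝ) → Fin d → ℝ}
    (hF : DLipR F δF) : ∃ B : ℝ, 0 ≤ B ∧ ∀ μ ∈ simplex d, l1 (δF μ) ≤ B := by
  obtain ⟨K, hK⟩ := hF.2.2
  rcases Set.eq_empty_or_nonempty (simplex d) with h | ⟨μ₀, hμ₀⟩
  · exact ⟨0, le_rfl, fun μ hμ => by simp [h] at hμ⟩
  · refine ⟨l1 (δF μ₀) + |K| * 2, by have := l1_nonneg (δF μ₀); positivity, fun μ hμ => ?_⟩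
    have h1 := hK μ hμ μ₀ hμ₀
    have h2 := l1_add_le (δF μ₀) (δF μ - δF μ₀)
    rw [add_sub_cancel] at h2
    have h3 : K * l1 (μ - μ₀) ≤ |K| * 2 :=
      mul_le_mul (le_abs_self K) (l1_sub_le_two hμ hμ₀) (l1_nonneg _) (abs_nonneg _)
    linarith

/-- Distance from a probability vector to the normalization of a nearby nonnegative vector. -/
lemma l1_normalize1_sub_le {d : ℕ} {μ v : Fin d → ℝ} (hμ : μ ∈ simplex d) (h0 : ∀ z, 0 ≤ v z)
    (hV : 0 < ∑ z, v z) : l1 (normalize1 v - μ) ≤ 2 * l1 (v - μ) := by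
  have hV1 : |1 - ∑ z, v z| ≤ l1 (v - μ) := by
    have := abs_sum_le_l1 (v - μ)
    simp only [Pi.sub_apply, Finset.sum_sub_distrib, hμ.2] at this
    rwa [abs_sub_comm]
  have h1 : l1 (normalize1 v - v) ≤ |1 - ∑ z, v z| := by
    have hl : l1 v = ∑ z, v z := Finset.sum_congr rfl fun z _ => abs_of_nonneg (h0 z)
    have : normalize1 v - v = ((∑ z, v z)⁻¹ - 1) • v := by
      rw [normalize1, sub_smul, one_smul]
    rw [this, l1_smul, hl]
    nth_rw 2 [← abs_of_pos hV]
    rw [← abs_mul, sub_mul, inv_mul_cancel₀ hV.ne', one_mul]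
  have h2 := l1_add_le (normalize1 v - v) (v - μ)
  rw [sub_add_sub_cancel] at h2
  linarith

/-- The one-coordinate step of the expansion: moving a single coordinate from `a` to `b`, while
staying within ℓ¹ distance `D ≤ 1/2` of the base point `μ`. -/
lemma coordinate_step {d : ℕ} {F : (Fin d → ℝ) → ℝ} {δF : (Fin d → ℝ) → Fin d → ℝ}
    (hF : DLipR F δF) {K B : ℝ} (hK0 : 0 ≤ K)
    (hK : ∀ μ ∈ simplex d, ∀ ν ∈ simplex d, l1 (δF μ - δF ν) ≤ K * l1 (μ - ν))
    (hB : ∀ μ ∈ simplex d, l1 (δF μ) ≤ B) {μ w : Fin d → ℝ} (hμ : μ ∈ simplex d) {z : Fin d}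
    {a b D : ℝ} (hab : a ≤ b) (hD : D ≤ 1 / 2)
    (h0 : ∀ s ∈ Set.Icc a b, ∀ x, 0 ≤ Function.update w z s x)
    (hdist : ∀ s ∈ Set.Icc a b, l1 (Function.update w z s - μ) ≤ D) :
    |F (normalize1 (Function.update w z b)) - F (normalize1 (Function.update w z a))
      - δF μ z * (b - a)| ≤ (4 * K + 2 * B) * D * (b - a) := by
  have hVlow : ∀ s ∈ Set.Icc a b, |∑ x, Function.update w z s x - 1| ≤ D := by
    intro s hs
    have := (abs_sum_le_l1 (Function.update w z s - μ)).trans (hdist s hs)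
    simpa only [Pi.sub_apply, Finset.sum_sub_distrib, hμ.2] using this
  have hVpos : ∀ s ∈ Set.Icc a b, 1 / 2 ≤ ∑ x, Function.update w z s x := by
    intro s hs
    have := (abs_le.1 (hVlow s hs)).1
    linarith
  have hVpos' : ∀ s ∈ Set.Icc a b, 0 < ∑ x, Function.update w z s x := fun s hs => by
    linarith [hVpos s hs]
  have hB0 : 0 ≤ B := (l1_nonneg _).trans (hB μ hμ)
  obtain ⟨K₀, hK₀⟩ := hF.1
  have key := norm_image_sub_le_of_norm_deriv_right_le_segment
    (f := fun s => F (normalize1 (Function.update w z s)) - δF μ z * s)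
    (f' := fun s => δF (normalize1 (Function.update w z s)) z *
      (∑ x, Function.update w z s x)⁻¹ - δF μ z) (a := a) (b := b)
    (C := (4 * K + 2 * B) * D) ?_ ?_ ?_ b ⟨hab, le_rfl⟩
  · rw [Real.norm_eq_abs] at key
    convert key using 2
    ring
  · refine ContinuousOn.sub ?_ (by fun_prop)
    refine (continuousOn_of_l1_lipschitz hK₀).comp ?_
      (fun s hs => normalize1_mem (h0 s hs) (hVpos' s hs))
    have hu : Continuous fun s : ℝ => Function.update w z s :=
      continuous_const.update z continuous_id
    unfold normalize1
    refine ContinuousOn.smul (ContinuousOn.inv₀ ?_ fun s hs => (hVpos' s hs).ne') hu.continuousOn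
    exact (continuous_finsetSum _ fun x _ => (continuous_apply x).comp hu).continuousOn
  · intro s hs
    have hs' : s ∈ Set.Icc a b := ⟨hs.1, hs.2.le⟩
    refine (hasDerivWithinAt_normalize1 hF w z s (h0 s hs') (hVpos' s hs')).sub ?_
    simpa using ((hasDerivAt_id s).const_mul (δF μ z)).hasDerivWithinAt
  · intro s hs
    have hs' : s ∈ Set.Icc a b := ⟨hs.1, hs.2.le⟩
    have hV := hVpos s hs'
    have hV0 := hVpos' s hs'
    have hm := normalize1_mem (h0 s hs') hV0
    have e1 := (l1_normalize1_sub_le hμ (h0 s hs') hV0).trans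
      (mul_le_mul_of_nonneg_left (hdist s hs') (by norm_num))
    have e2 := (abs_le_l1 _ z).trans ((hK _ hm μ hμ).trans (mul_le_mul_of_nonneg_left e1 hK0))
    have e3 := (abs_le_l1 (δF μ) z).trans (hB μ hμ)
    set η := normalize1 (Function.update w z s)
    have e4 := hVlow s hs'
    set V := ∑ x, Function.update w z s x
    have hVi : V⁻¹ ≤ 2 := by
      rw [inv_le_comm₀ hV0 (by norm_num)]
      linarith
    have e5 : δF η z * V⁻¹ - δF μ z = ((δF η - δF μ) z + δF μ z * (1 - V)) * V⁻¹ := by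
      simp only [Pi.sub_apply]
      field_simp
      ring
    rw [Real.norm_eq_abs, e5, abs_mul, abs_of_pos (inv_pos.2 hV0)]
    have e6 : |(δF η - δF μ) z + δF μ z * (1 - V)| ≤ K * (2 * D) + B * D := by
      refine (abs_add_le _ _).trans (add_le_add e2 ?_)
      rw [abs_mul, abs_sub_comm]
      exact mul_le_mul e3 e4 (abs_nonneg _) hB0
    calc |(δF η - δF μ) z + δF μ z * (1 - V)| * V⁻¹ ≤ (K * (2 * D) + B * D) * 2 :=
          mul_le_mul e6 hVi (inv_nonneg.2 hV0.le) ((abs_nonneg _).trans e6)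
      _ = (4 * K + 2 * B) * D := by ring

/-- Functions in (D-Lip) have a first-order expansion with quadratic remainder, uniformly on the
simplex. The path from `μ` to `ν` changes one coordinate at a time through the positive cone, on
which `F` is extended by homogeneity of degree zero. -/
lemma exists_taylor {d : ℕ} {F : (Fin d → ℝ) → ℝ} {δF : (Fin d → ℝ) → Fin d → ℝ}
    (hF : DLipR F δF) : ∃ C : ℝ, ∀ μ ∈ simplex d, ∀ ν ∈ simplex d,
      |F ν - F μ - ∑ z, δF μ z * (ν - μ) z| ≤ C * l1 (ν - μ) ^ 2 := by
  obtain ⟨B, hB0, hB⟩ := exists_l1_bound hF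
  obtain ⟨K₀, hK₀⟩ := hF.1
  obtain ⟨K', hK'⟩ := hF.2.2
  have hK : ∀ μ ∈ simplex d, ∀ ν ∈ simplex d, l1 (δF μ - δF ν) ≤ |K'| * l1 (μ - ν) :=
    fun μ hμ ν hν => (hK' μ hμ ν hν).trans
      (mul_le_mul_of_nonneg_right (le_abs_self _) (l1_nonneg _))
  have hKn := abs_nonneg K'
  refine ⟨(4 * |K'| + 2 * B) + 2 * (|K₀| + B), fun μ hμ ν hν => ?_⟩
  have hl := l1_nonneg (ν - μ)
  rcases le_or_gt (l1 (ν - μ)) (1 / 2) with hsmall | hlarge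
  · set D := l1 (ν - μ) with hDdef
    -- Intermediate vectors are coordinatewise between `μ` and `ν`.
    have hbetween : ∀ v : Fin d → ℝ, (∀ x, |v x - μ x| ≤ |ν x - μ x|) → l1 (v - μ) ≤ D :=
      fun v hv => Finset.sum_le_sum fun x _ => hv x
    have hind : ∀ S : Finset (Fin d),
        |F (normalize1 (S.piecewise ν μ)) - F μ - ∑ z ∈ S, δF μ z * (ν - μ) z|
          ≤ (4 * |K'| + 2 * B) * D * ∑ z ∈ S, |(ν - μ) z| := by
      intro S
      induction S using Finset.induction_on with
      | empty => simp [normalize1_of_mem hμ]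
      | insert z S hz ih =>
        rw [Finset.sum_insert hz, Finset.sum_insert hz, Finset.piecewise_insert]
        set w := S.piecewise ν μ with hw
        have hwz : w z = μ z := by simp [hw, hz]
        have hww : w = Function.update w z (μ z) := by rw [← hwz, Function.update_eq_self]
        have hw0 : ∀ x, 0 ≤ w x := fun x => by
          by_cases h : x ∈ S
          · simp [hw, h, hν.1 x]
          · simp [hw, h, hμ.1 x]
        have hwd : ∀ x, |w x - μ x| ≤ |ν x - μ x| := fun x => by
          by_cases h : x ∈ S
          · simp [hw, h]
          · simp [hw, h]
        have h0 : ∀ s, 0 ≤ s → ∀ x, 0 ≤ Function.update w z s x := by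
          intro s hs x
          by_cases h : x = z
          · subst h
            simpa using hs
          · simpa [h] using hw0 x
        have hdist : ∀ s, |s - μ z| ≤ |ν z - μ z| → l1 (Function.update w z s - μ) ≤ D := by
          intro s hs
          refine hbetween _ fun x => ?_
          by_cases h : x = z
          · subst h
            simpa using hs
          · simpa [h] using hwd x
        have hstep : |F (normalize1 (Function.update w z (ν z)))
            - F (normalize1 (Function.update w z (μ z))) - δF μ z * (ν z - μ z)|
            ≤ (4 * |K'| + 2 * B) * D * |ν z - μ z| := by
          rcases le_total (μ z) (ν z) with h | h
          · rw [abs_of_nonneg (sub_nonneg.2 h)]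
            refine coordinate_step hF hKn hK hB hμ h hsmall
              (fun s hs => h0 s ((hμ.1 z).trans hs.1)) (fun s hs => hdist s ?_)
            rw [abs_of_nonneg (sub_nonneg.2 h), abs_of_nonneg (sub_nonneg.2 hs.1)]
            linarith [hs.2]
          · rw [abs_of_nonpos (sub_nonpos.2 h), neg_sub]
            have := coordinate_step hF hKn hK hB hμ h hsmall
              (fun s hs => h0 s ((hν.1 z).trans hs.1)) (fun s hs => hdist s (by
                rw [abs_of_nonpos (sub_nonpos.2 h), abs_of_nonpos (sub_nonpos.2 hs.2)]
                linarith [hs.1]))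
            rw [← abs_neg] at this
            convert this using 2
            ring
        rw [← hww] at hstep
        have hsplit : F (normalize1 (Function.update w z (ν z))) - F μ
            - (δF μ z * (ν - μ) z + ∑ z ∈ S, δF μ z * (ν - μ) z)
            = (F (normalize1 (Function.update w z (ν z))) - F (normalize1 w)
                - δF μ z * (ν z - μ z))
              + (F (normalize1 w) - F μ - ∑ z ∈ S, δF μ z * (ν - μ) z) := by
          simp only [Pi.sub_apply]
          ring
        rw [hsplit, mul_add]
        exact (abs_add_le _ _).trans (add_le_add hstep ih)
    have hfin := hind Finset.univ
    rw [Finset.piecewise_univ, normalize1_of_mem hν] at hfin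
    refine hfin.trans ?_
    change (4 * |K'| + 2 * B) * D * D ≤ _
    have : 0 ≤ 2 * (|K₀| + B) * D ^ 2 := by positivity
    nlinarith
  · have h1 : |F ν - F μ| ≤ |K₀| * l1 (ν - μ) := (hK₀ ν hν μ hμ).trans
      (mul_le_mul_of_nonneg_right (le_abs_self _) hl)
    have h2 : |∑ z, δF μ z * (ν - μ) z| ≤ B * l1 (ν - μ) :=
      (abs_sum_mul_le_l1_mul_l1 _ _).trans (mul_le_mul_of_nonneg_right (hB μ hμ) hl)
    have h3 := abs_sub (F ν - F μ) (∑ z, δF μ z * (ν - μ) z)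
    have h4 : l1 (ν - μ) ≤ 2 * l1 (ν - μ) ^ 2 := by nlinarith
    have h5 : 0 ≤ |K₀| + B := by positivity
    have h6 : 0 ≤ (4 * |K'| + 2 * B) * l1 (ν - μ) ^ 2 := by positivity
    nlinarith [mul_le_mul_of_nonneg_left h4 h5]

/-- The derivative of a `K`-Lipschitz function in (D-Lip) is bounded by `K` on zero-sum
directions. -/
lemma abs_deriv_le_of_lipschitz {d : ℕ} {F : (Fin d → ℝ) → ℝ} {δF : (Fin d → ℝ) → Fin d → ℝ}
    (hF : DLipR F δF) {K : ℝ}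
    (hK : ∀ μ ∈ simplex d, ∀ ν ∈ simplex d, |F μ - F ν| ≤ K * l1 (μ - ν))
    {μ q : Fin d → ℝ} (hμ : μ ∈ simplex d) (hq : ∑ z, q z = 0) :
    |∑ z, δF μ z * q z| ≤ K * l1 q := by
  obtain ⟨C, hC⟩ := exists_taylor hF
  obtain ⟨K', hK'⟩ := hF.2.2
  by_cases hq0 : q = 0
  · subst hq0
    simp [l1]
  -- Write `q = a (ν' - μ')` with `a` the mass of the positive part of `q`.
  set a := ∑ z, (q z)⁺ with ha
  have ha' : ∑ z, (q z)⁻ = a := by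
    have : ∑ z, ((q z)⁺ - (q z)⁻) = 0 := by simpa only [posPart_sub_negPart] using hq
    rw [Finset.sum_sub_distrib] at this
    linarith
  have hapos : 0 < a := by
    refine lt_of_le_of_ne (Finset.sum_nonneg fun z _ => posPart_nonneg _) fun h0 => hq0 ?_
    have h1 := (Finset.sum_eq_zero_iff_of_nonneg fun z _ => posPart_nonneg (q z)).1 h0.symm
    have h2 := (Finset.sum_eq_zero_iff_of_nonneg fun z _ => negPart_nonneg (q z)).1
      (ha'.trans h0.symm)
    ext z
    rw [← posPart_sub_negPart (q z), h1 z (Finset.mem_univ z), h2 z (Finset.mem_univ z)]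
    simp
  set ν' : Fin d → ℝ := fun z => a⁻¹ * (q z)⁺ with hν'
  set μ' : Fin d → ℝ := fun z => a⁻¹ * (q z)⁻ with hμ'
  have hνm : ν' ∈ simplex d := by
    refine ⟨fun z => mul_nonneg (inv_nonneg.2 hapos.le) (posPart_nonneg _), ?_⟩
    rw [hν', ← Finset.mul_sum, ← ha, inv_mul_cancel₀ hapos.ne']
  have hμm : μ' ∈ simplex d := by
    refine ⟨fun z => mul_nonneg (inv_nonneg.2 hapos.le) (negPart_nonneg _), ?_⟩
    rw [hμ', ← Finset.mul_sum, ha']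
    exact inv_mul_cancel₀ (ne_of_gt hapos)
  -- Both `(1 - h) μ + h ν'` and `(1 - h) μ + h μ'` lie in the simplex; let `h → 0`.
  have hbound : ∀ h : ℝ, 0 < h → h ≤ 1 →
      |∑ z, δF μ z * q z| ≤ K * l1 q + h * (a⁻¹ * C * l1 q ^ 2 + |K'| * 2 * l1 q) := by
    intro h h0 h1
    have hA := mix_mem hμ hμm h0.le h1
    have hB := mix_mem hμ hνm h0.le h1
    have hdiff : ((1 - h) • μ + h • ν') - ((1 - h) • μ + h • μ') = (h * a⁻¹) • q := by
      ext z
      simp only [Pi.sub_apply, Pi.add_apply, Pi.smul_apply, smul_eq_mul, hν', hμ']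
      have := posPart_sub_negPart (q z)
      linear_combination (h * a⁻¹) * this
    have hdiff2 : ((1 - h) • μ + h • μ') - μ = h • (μ' - μ) := by
      ext z
      simp
      ring
    have t1 := hC _ hA _ hB
    have t2 := hK _ hB _ hA
    have t3 := hK' _ hA _ hμ
    set η := (1 - h) • μ + h • μ'
    set θ := (1 - h) • μ + h • ν'
    have hc : 0 < h * a⁻¹ := mul_pos h0 (inv_pos.2 hapos)
    rw [hdiff, l1_smul, abs_of_pos hc] at t1 t2
    rw [hdiff2, l1_smul, abs_of_pos h0] at t3
    have t4 : ∑ z, δF η z * ((h * a⁻¹) • q) z = (h * a⁻¹) * ∑ z, δF η z * q z := by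
      rw [Finset.mul_sum]
      refine Finset.sum_congr rfl fun z _ => ?_
      simp
      ring
    rw [t4] at t1
    have t5 : (h * a⁻¹) * |∑ z, δF η z * q z|
        ≤ (h * a⁻¹) * (K * l1 q + h * (a⁻¹ * C * l1 q ^ 2)) := by
      rw [← abs_of_pos hc, ← abs_mul, abs_of_pos hc]
      have := abs_sub_abs_le_abs_sub ((h * a⁻¹) * ∑ z, δF η z * q z) (F θ - F η)
      rw [abs_sub_comm (h * a⁻¹ * ∑ z, δF η z * q z)] at this
      linarith
    have t6 := le_of_mul_le_mul_left t5 hc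
    have t7 : |∑ z, δF μ z * q z - ∑ z, δF η z * q z| ≤ h * (|K'| * 2 * l1 q) := by
      rw [← Finset.sum_sub_distrib]
      simp only [← sub_mul]
      refine (abs_sum_mul_le_l1_mul_l1 (fun z => δF μ z - δF η z) q).trans ?_
      have : l1 (δF μ - δF η) ≤ |K'| * (h * 2) := by
        rw [l1_sub_comm]
        refine t3.trans (mul_le_mul (le_abs_self _) ?_ (mul_nonneg h0.le (l1_nonneg _))
          (abs_nonneg _))
        exact mul_le_mul_of_nonneg_left (l1_sub_le_two hμm hμ) h0.le
      calc _ ≤ |K'| * (h * 2) * l1 q := mul_le_mul_of_nonneg_right this (l1_nonneg _)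
        _ = _ := by ring
    have t8 := abs_sub_abs_le_abs_sub (∑ z, δF μ z * q z) (∑ z, δF η z * q z)
    linarith
  have hlim : Tendsto (fun h : ℝ => K * l1 q + h * (a⁻¹ * C * l1 q ^ 2 + |K'| * 2 * l1 q))
      (𝓝[>] 0) (𝓝 (K * l1 q)) := by
    have := ((by fun_prop : Continuous fun h : ℝ =>
      K * l1 q + h * (a⁻¹ * C * l1 q ^ 2 + |K'| * 2 * l1 q)).tendsto 0)
    rw [zero_mul, add_zero] at this
    exact this.mono_left nhdsWithin_le_nhds
  refine ge_of_tendsto hlim ?_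
  filter_upwards [Ioc_mem_nhdsGT (zero_lt_one' ℝ)] with h hh
  exact hbound h hh.1 hh.2

/-! ### Contraction of the flow and of its difference quotients -/

/-- The difference quotients `(F ν - F μ) / ε` along `ν = μ + ε p`, compared at two
base points: the dependence on `p` is `K`-Lipschitz, up to an error of the order of the distance
of the base points and of the step sizes. -/
lemma exists_quotient_bound {d : ℕ} {F : (Fin d → ℝ) → ℝ} {δF : (Fin d → ℝ) → Fin d → ℝ}
    (hF : DLipR F δF) {K : ℝ}
    (hK : ∀ μ ∈ simplex d, ∀ ν ∈ simplex d, |F μ - F ν| ≤ K * l1 (μ - ν)) :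
    ∃ C : ℝ, 0 ≤ C ∧ ∀ μ ∈ simplex d, ∀ ν ∈ simplex d, ∀ μ' ∈ simplex d, ∀ ν' ∈ simplex d,
      ∀ ε ε' : ℝ, 0 < ε → 0 < ε' → l1 (ε⁻¹ • (ν - μ)) ≤ 2 → l1 (ε'⁻¹ • (ν' - μ')) ≤ 2 →
      |ε⁻¹ * (F ν - F μ) - ε'⁻¹ * (F ν' - F μ')|
        ≤ K * l1 (ε⁻¹ • (ν - μ) - ε'⁻¹ • (ν' - μ')) + C * (l1 (μ - μ') + ε + ε') := by
  obtain ⟨C, hC⟩ := exists_taylor hF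
  obtain ⟨K', hK'⟩ := hF.2.2
  have hone : ∀ μ ∈ simplex d, ∀ ν ∈ simplex d, ∀ ε : ℝ, 0 < ε → l1 (ε⁻¹ • (ν - μ)) ≤ 2 →
      |ε⁻¹ * (F ν - F μ) - ∑ z, δF μ z * (ε⁻¹ • (ν - μ)) z| ≤ 4 * |C| * ε := by
    intro μ hμ ν hν ε hε hp
    have h1 := hC μ hμ ν hν
    have h2 : ε⁻¹ * (F ν - F μ) - ∑ z, δF μ z * (ε⁻¹ • (ν - μ)) z
        = ε⁻¹ * (F ν - F μ - ∑ z, δF μ z * (ν - μ) z) := by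
      rw [mul_sub ε⁻¹ (F ν - F μ), Finset.mul_sum]
      congr 1
      refine Finset.sum_congr rfl fun z _ => ?_
      simp only [Pi.smul_apply, smul_eq_mul]
      ring
    rw [l1_smul, abs_of_pos (inv_pos.2 hε), inv_mul_le_iff₀ hε] at hp
    rw [h2, abs_mul, abs_of_pos (inv_pos.2 hε), inv_mul_le_iff₀ hε]
    calc _ ≤ C * l1 (ν - μ) ^ 2 := h1
      _ ≤ |C| * (ε * 2) ^ 2 :=
          mul_le_mul (le_abs_self _) (pow_le_pow_left₀ (l1_nonneg _) hp 2) (by positivity)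
            (abs_nonneg _)
      _ = ε * (4 * |C| * ε) := by ring
  refine ⟨4 * |C| + 2 * |K'|, by positivity, ?_⟩
  intro μ hμ ν hν μ' hμ' ν' hν' ε ε' hε hε' hp hp'
  have a1 := hone μ hμ ν hν ε hε hp
  have a2 := hone μ' hμ' ν' hν' ε' hε' hp'
  set p := ε⁻¹ • (ν - μ) with hpdef
  set p' := ε'⁻¹ • (ν' - μ') with hpdef'
  have hsum : ∑ z, (p - p') z = 0 := by
    simp [hpdef, hpdef', Finset.sum_sub_distrib, ← Finset.mul_sum, hμ.2, hν.2, hμ'.2, hν'.2]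
  have a3 := abs_deriv_le_of_lipschitz hF hK hμ hsum
  have a4 : |∑ z, (δF μ - δF μ') z * p' z| ≤ |K'| * l1 (μ - μ') * 2 := by
    refine (abs_sum_mul_le_l1_mul_l1 _ _).trans (mul_le_mul ?_ hp' (l1_nonneg _)
      (mul_nonneg (abs_nonneg _) (l1_nonneg _)))
    exact (hK' μ hμ μ' hμ').trans (mul_le_mul_of_nonneg_right (le_abs_self _) (l1_nonneg _))
  have a5 : ∑ z, δF μ z * p z - ∑ z, δF μ' z * p' z
      = ∑ z, δF μ z * (p - p') z + ∑ z, (δF μ - δF μ') z * p' z := by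
    rw [← Finset.sum_sub_distrib, ← Finset.sum_add_distrib]
    refine Finset.sum_congr rfl fun z _ => ?_
    simp only [Pi.sub_apply]
    ring
  have b1 := abs_le.1 a1
  have b2 := abs_le.1 a2
  have b3 := abs_le.1 a3
  have b4 := abs_le.1 a4
  have c1 : 0 ≤ |C| * l1 (μ - μ') := mul_nonneg (abs_nonneg _) (l1_nonneg _)
  have c2 : 0 ≤ |K'| * ε := by positivity
  have c3 : 0 ≤ |K'| * ε' := by positivity
  rw [abs_le]
  constructor <;> nlinarith [b1.1, b1.2, b2.1, b2.2, b3.1, b3.2, b4.1, b4.2]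

lemma flow_contraction {d : ℕ} (hd : 0 < d)
    {α : (Fin d → ℝ) → Matrix (Fin d) (Fin d) ℝ} (hα : IsRate d α)
    {m : ℝ → (Fin d → ℝ) → Fin d → ℝ} (hm : IsFlow α m) {L K : ℝ} (hKL : K < L)
    (hlow : ∀ μ ∈ simplex d, ∀ x y, x ≠ y → L ≤ α μ x y)
    (hK : ∀ μ ∈ simplex d, ∀ ν ∈ simplex d, ∀ x y, |α μ x y - α ν x y| ≤ K * l1 (μ - ν))
    {μ ν : Fin d → ℝ} (hμ : μ ∈ simplex d) (hν : ν ∈ simplex d) {t : ℝ} (ht : 0 ≤ t) :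
    l1 (m t μ - m t ν) ≤ Real.exp (-(d * (L - K)) * t) * l1 (μ - ν) := by
  obtain ⟨hμ0, hμS, hμD⟩ := hm μ hμ
  obtain ⟨hν0, hνS, hνD⟩ := hm ν hν
  have := l1_le_of_dissipative (q := fun s => m s μ - m s ν) (A := fun s => α (m s μ))
    (w := fun s => Matrix.vecMul (m s ν) (α (m s μ) - α (m s ν))) (R := 0) hd hKL le_rfl
    (fun s hs => by
      refine ((hμD s hs).sub (hνD s hs)).congr_deriv ?_
      rw [Matrix.sub_vecMul, Matrix.vecMul_sub]
      abel)
    (fun s hs => by simp [Finset.sum_sub_distrib, (hμS s hs).2, (hνS s hs).2])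
    (fun s hs => hlow _ (hμS s hs)) (fun s hs => hα.2.2 _ (hμS s hs))
    (fun s hs => by
      have h := l1_vecMul_le (m s ν) (α (m s μ) - α (m s ν)) (hK _ (hμS s hs) _ (hνS s hs))
      rw [l1_eq_one (hνS s hs)] at h
      simp only [add_zero]
      linarith) t ht
  simpa only [hμ0, hν0, zero_div, add_zero] using this

/-- The difference quotient of the flow in the direction of the Dirac mass at `z`. -/
noncomputable def flowQuotient {d : ℕ} (m : ℝ → (Fin d → ℝ) → Fin d → ℝ) (z : Fin d) (ε : ℝ)
    (t : ℝ) (μ : Fin d → ℝ) : Fin d → ℝ :=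
  ε⁻¹ • (m t ((1 - ε) • μ + ε • bvec z) - m t μ)

lemma mix_sub {d : ℕ} (μ ν : Fin d → ℝ) (ε : ℝ) :
    ((1 - ε) • μ + ε • ν) - μ = ε • (ν - μ) := by
  ext z
  simp
  ring

/-- The difference quotients of the flow are Lipschitz in the base point up to the step sizes,
uniformly in time: each of them solves the linearized equation up to an error of the order
of the step size. -/
lemma exists_flowQuotient_bound {d : ℕ} (hd : 0 < d)
    {α : (Fin d → ℝ) → Matrix (Fin d) (Fin d) ℝ}
    {δα : (Fin d → ℝ) → Fin d → Matrix (Fin d) (Fin d) ℝ}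
    (hα : IsRate d α) (hαD : DLipRate α δα)
    {m : ℝ → (Fin d → ℝ) → Fin d → ℝ} (hm : IsFlow α m) {L K : ℝ} (hK0 : 0 ≤ K) (hKL : K < L)
    (hlow : ∀ μ ∈ simplex d, ∀ x y, x ≠ y → L ≤ α μ x y)
    (hK : ∀ μ ∈ simplex d, ∀ ν ∈ simplex d, ∀ x y, |α μ x y - α ν x y| ≤ K * l1 (μ - ν)) :
    ∃ C : ℝ, 0 < C ∧ ∀ z, ∀ μ ∈ simplex d, ∀ μ' ∈ simplex d, ∀ ε ε' : ℝ,
      0 < ε → ε ≤ 1 → 0 < ε' → ε' ≤ 1 → ∀ t, 0 ≤ t →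
      l1 (flowQuotient m z ε t μ - flowQuotient m z ε' t μ') ≤ C * (l1 (μ - μ') + ε + ε') := by
  choose C₀ hC₀0 hC₀ using fun x y => exists_quotient_bound (hαD x y)
    (fun μ hμ ν hν => hK μ hμ ν hν x y)
  set C := ∑ x, ∑ y, C₀ x y with hCdef
  have hC0 : 0 ≤ C := Finset.sum_nonneg fun x _ => Finset.sum_nonneg fun y _ => hC₀0 x y
  have hCle : ∀ x y, C₀ x y ≤ C := fun x y =>
    (Finset.single_le_sum (f := fun y => C₀ x y) (fun y _ => hC₀0 x y) (Finset.mem_univ y)).trans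
      (Finset.single_le_sum (f := fun x => ∑ y, C₀ x y)
        (fun x _ => Finset.sum_nonneg fun y _ => hC₀0 x y) (Finset.mem_univ x))
  have hlam : 0 < d * (L - K) := mul_pos (by exact_mod_cast hd) (by linarith)
  have hexp : ∀ t, 0 ≤ t → Real.exp (-(d * (L - K)) * t) ≤ 1 := fun t ht =>
    Real.exp_le_one_iff.2 (by nlinarith)
  have hcontr : ∀ μ ∈ simplex d, ∀ ν ∈ simplex d, ∀ t, 0 ≤ t →
      l1 (m t μ - m t ν) ≤ l1 (μ - ν) := fun μ hμ ν hν t ht =>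
    (flow_contraction hd hα hm hKL hlow hK hμ hν ht).trans
      (mul_le_of_le_one_left (l1_nonneg _) (hexp t ht))
  set R₀ : ℝ := d * (C + 6 * K) with hR₀
  have hR₀0 : 0 ≤ R₀ := by positivity
  refine ⟨1 + R₀ / (d * (L - K)), by positivity, ?_⟩
  intro z μ hμ μ' hμ' ε ε' hε hε1 hε' hε'1 t ht
  have hμe := mix_mem hμ (bvec_mem z) hε.le hε1
  have hμe' := mix_mem hμ' (bvec_mem z) hε'.le hε'1
  set μe := (1 - ε) • μ + ε • bvec z with hμedef
  set μe' := (1 - ε') • μ' + ε' • bvec z with hμedef'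
  have hde : l1 (μe - μ) ≤ ε * 2 := by
    rw [hμedef, mix_sub, l1_smul, abs_of_pos hε]
    exact mul_le_mul_of_nonneg_left (l1_sub_le_two (bvec_mem z) hμ) hε.le
  have hde' : l1 (μe' - μ') ≤ ε' * 2 := by
    rw [hμedef', mix_sub, l1_smul, abs_of_pos hε']
    exact mul_le_mul_of_nonneg_left (l1_sub_le_two (bvec_mem z) hμ') hε'.le
  obtain ⟨h0, hS, hD⟩ := hm μ hμ
  obtain ⟨h0', hS', hD'⟩ := hm μ' hμ'
  obtain ⟨h0e, hSe, hDe⟩ := hm μe hμe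
  obtain ⟨h0e', hSe', hDe'⟩ := hm μe' hμe'
  set ρ := l1 (μ - μ') + ε + ε' with hρ
  have hρ0 : 0 ≤ ρ := by
    have := l1_nonneg (μ - μ')
    positivity
  set p : ℝ → Fin d → ℝ := fun s => ε⁻¹ • (m s μe - m s μ) with hp
  set p' : ℝ → Fin d → ℝ := fun s => ε'⁻¹ • (m s μe' - m s μ') with hp'
  have hp2 : ∀ s, 0 ≤ s → l1 (p s) ≤ 2 := by
    intro s hs
    rw [hp, l1_smul, abs_of_pos (inv_pos.2 hε), inv_mul_le_iff₀ hε]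
    exact (hcontr _ hμe _ hμ s hs).trans hde
  have hp2' : ∀ s, 0 ≤ s → l1 (p' s) ≤ 2 := by
    intro s hs
    rw [hp', l1_smul, abs_of_pos (inv_pos.2 hε'), inv_mul_le_iff₀ hε']
    exact le_trans (hcontr _ hμe' _ hμ' s hs) (by linarith)
  -- Difference quotients of `α` along the two trajectories.
  set E : ℝ → Matrix (Fin d) (Fin d) ℝ := fun s => ε⁻¹ • (α (m s μe) - α (m s μ)) with hE
  set E' : ℝ → Matrix (Fin d) (Fin d) ℝ := fun s => ε'⁻¹ • (α (m s μe') - α (m s μ')) with hE'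
  have hEb : ∀ s, 0 ≤ s → ∀ x y, |(E s - E' s) x y| ≤ K * l1 (p s - p' s) + C * ρ := by
    intro s hs x y
    have h1 := hC₀ x y _ (hS s hs) _ (hSe s hs) _ (hS' s hs) _ (hSe' s hs) ε ε' hε hε'
      (hp2 s hs) (hp2' s hs)
    have h2 := hcontr _ hμ _ hμ' s hs
    refine h1.trans (add_le_add le_rfl ?_)
    refine mul_le_mul (hCle x y) (by rw [hρ]; linarith) ?_ hC0
    have := l1_nonneg (m s μ - m s μ')
    positivity
  have hEb' : ∀ s, 0 ≤ s → ∀ x y, |E' s x y| ≤ 2 * K := by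
    intro s hs x y
    have h1 := hK _ (hSe' s hs) _ (hS' s hs) x y
    have h2 := (hcontr _ hμe' _ hμ' s hs).trans hde'
    change |ε'⁻¹ * (α (m s μe') x y - α (m s μ') x y)| ≤ _
    rw [abs_mul, abs_of_pos (inv_pos.2 hε'), inv_mul_le_iff₀ hε']
    nlinarith [mul_le_mul_of_nonneg_left h2 hK0]
  have hnn : ∀ s, 0 ≤ s → l1 (m s μe - m s μe') ≤ 2 * ρ := by
    intro s hs
    refine (hcontr _ hμe _ hμe' s hs).trans ?_
    have e1 := l1_add_le (μe - μ) (μ - μe')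
    have e2 := l1_add_le (μ - μ') (μ' - μe')
    rw [sub_add_sub_cancel] at e1 e2
    rw [l1_sub_comm μ' μe'] at e2
    have := l1_nonneg (μ - μ')
    rw [hρ]
    linarith
  have key := l1_le_of_dissipative (q := fun s => p s - p' s) (A := fun s => α (m s μ))
    (w := fun s => Matrix.vecMul (p' s) (α (m s μ) - α (m s μ'))
      + (Matrix.vecMul (m s μe) (E s - E' s) + Matrix.vecMul (m s μe - m s μe') (E' s)))
    (R := R₀ * ρ) hd hKL (by positivity)
    (fun s hs => by
      refine ((((hDe s hs).sub (hD s hs)).const_smul ε⁻¹).sub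
        (((hDe' s hs).sub (hD' s hs)).const_smul ε'⁻¹)).congr_deriv ?_
      simp only [hp, hp', hE, hE', Matrix.sub_vecMul, Matrix.vecMul_sub, Matrix.smul_vecMul,
        Matrix.vecMul_smul, smul_sub]
      abel)
    (fun s hs => by
      simp [hp, hp', Finset.sum_sub_distrib, ← Finset.mul_sum, (hS s hs).2, (hS' s hs).2,
        (hSe s hs).2, (hSe' s hs).2])
    (fun s hs => hlow _ (hS s hs)) (fun s hs => hα.2.2 _ (hS s hs))
    (fun s hs => by
      have hd0 : (0 : ℝ) ≤ d := Nat.cast_nonneg d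
      have b1 := l1_vecMul_le (p' s) (α (m s μ) - α (m s μ')) (hK _ (hS s hs) _ (hS' s hs))
      have b2 := l1_vecMul_le (m s μe) (E s - E' s) (hEb s hs)
      have b3 := l1_vecMul_le (m s μe - m s μe') (E' s) (hEb' s hs)
      rw [l1_eq_one (hSe s hs)] at b2
      have b4 : d * (K * l1 (m s μ - m s μ')) * l1 (p' s) ≤ d * (K * ρ) * 2 := by
        have c1 : l1 (m s μ - m s μ') ≤ ρ := by
          have := hcontr _ hμ _ hμ' s hs
          rw [hρ]
          linarith
        have := hp2' s hs
        have := l1_nonneg (p' s)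
        gcongr
      have b5 : d * (2 * K) * l1 (m s μe - m s μe') ≤ d * (2 * K) * (2 * ρ) :=
        mul_le_mul_of_nonneg_left (hnn s hs) (by positivity)
      have b6 := l1_add_le (Matrix.vecMul (p' s) (α (m s μ) - α (m s μ')))
        (Matrix.vecMul (m s μe) (E s - E' s) + Matrix.vecMul (m s μe - m s μe') (E' s))
      have b7 := l1_add_le (Matrix.vecMul (m s μe) (E s - E' s))
        (Matrix.vecMul (m s μe - m s μe') (E' s))
      refine (b6.trans (add_le_add b1 b7)).trans ?_
      rw [hR₀]
      linarith) t ht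
  have hinit : p 0 - p' 0 = μ' - μ := by
    simp only [hp, hp', h0, h0', h0e, h0e']
    rw [hμedef, hμedef', mix_sub, mix_sub, inv_smul_smul₀ hε.ne', inv_smul_smul₀ hε'.ne']
    abel
  change l1 (p t - p' t) ≤ _
  refine key.trans ?_
  simp only [hinit]
  have e1 : Real.exp (-(d * (L - K)) * t) * l1 (μ' - μ) ≤ ρ := by
    refine (mul_le_of_le_one_left (l1_nonneg _) (hexp t ht)).trans ?_
    rw [l1_sub_comm, hρ]
    linarith
  have e2 : R₀ * ρ / (d * (L - K)) = R₀ / (d * (L - K)) * ρ := by ring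
  rw [e2]
  linarith

/-- The Lipschitz constant is nonnegative because the simplex has two distinct points. -/
lemma lipschitz_const_nonneg {d : ℕ} (hd : 1 < d)
    {α : (Fin d → ℝ) → Matrix (Fin d) (Fin d) ℝ} {K : ℝ}
    (hK : ∀ μ ∈ simplex d, ∀ ν ∈ simplex d, ∀ x y, |α μ x y - α ν x y| ≤ K * l1 (μ - ν)) :
    0 ≤ K := by
  let x : Fin d := ⟨0, by omega⟩
  let y : Fin d := ⟨1, hd⟩
  have hxy : x ≠ y := by simp [x, y]
  have h1 := (abs_nonneg _).trans (hK _ (bvec_mem x) _ (bvec_mem y) x x)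
  have h2 : 0 < l1 (bvec x - bvec y) := by
    have := abs_le_l1 (bvec x - bvec y) x
    simp only [bvec, Pi.sub_apply, if_true, if_neg hxy] at this
    norm_num at this
    exact lt_of_lt_of_le one_pos this
  exact nonneg_of_mul_nonneg_left h1 h2

/-- If the off-diagonal rates are bounded below by `L > 0` and the Lipschitz
constant `K` of `α` (componentwise, w.r.t. the ℓ¹ norm) satisfies `K < L/d`, then `α`
satisfies (Erg); in particular the nonlinear Markov chain is exponentially ergodic. -/
theorem erg_from_lower_bound_and_small_lipschitz {d : ℕ} (hd : 1 < d)
    (α : (Fin d → ℝ) → Matrix (Fin d) (Fin d) ℝ)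
    (δα : (Fin d → ℝ) → Fin d → Matrix (Fin d) (Fin d) ℝ)
    (hα : IsRate d α) (hαD : DLipRate α δα)
    (m : ℝ → (Fin d → ℝ) → Fin d → ℝ) (hm : IsFlow α m)
    (L K : ℝ) (hL : 0 < L)
    (hlow : ∀ μ ∈ simplex d, ∀ x y, x ≠ y → L ≤ α μ x y)
    (hK : ∀ μ ∈ simplex d, ∀ ν ∈ simplex d, ∀ x y, |α μ x y - α ν x y| ≤ K * l1 (μ - ν))
    (hKL : K < L / d) :
    ∃ (δm : ℝ → (Fin d → ℝ) → Fin d → Fin d → ℝ) (lam c₁ k₁ : ℝ),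
      Erg m δm lam c₁ k₁ := by
  have hd0 : 0 < d := by omega
  have hdR : (1 : ℝ) ≤ d := by exact_mod_cast hd0
  have hK0 := lipschitz_const_nonneg hd hK
  have hKL' : K < L := hKL.trans_le (div_le_self hL.le hdR)
  have hlam : 0 < d * (L - K) := mul_pos (by linarith) (by linarith)
  obtain ⟨C, hC0, hC⟩ := exists_flowQuotient_bound hd0 hα hαD hm hK0 hKL' hlow hK
  -- The difference quotients form a Cauchy filter as the step size tends to zero.
  have hlim : ∀ t, 0 ≤ t → ∀ μ ∈ simplex d, ∀ z, ∃ v : Fin d → ℝ,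
      Tendsto (fun ε => flowQuotient m z ε t μ) (𝓝[>] 0) (𝓝 v) := by
    intro t ht μ hμ z
    rw [← cauchy_map_iff_exists_tendsto, Metric.cauchy_iff]
    refine ⟨inferInstance, fun r hr => ?_⟩
    have hr' : 0 < min 1 (r / (3 * C)) := by positivity
    refine ⟨_, image_mem_map (Ioo_mem_nhdsGT hr'), ?_⟩
    rintro _ ⟨ε, hε, rfl⟩ _ ⟨ε', hε', rfl⟩
    have h1 := hC z μ hμ μ hμ ε ε' hε.1 (hε.2.le.trans (min_le_left _ _)) hε'.1
      (hε'.2.le.trans (min_le_left _ _)) t ht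
    rw [sub_self, show l1 (0 : Fin d → ℝ) = 0 by simp [l1]] at h1
    have h2 := hε.2.trans_le (min_le_right _ _)
    have h3 := hε'.2.trans_le (min_le_right _ _)
    rw [lt_div_iff₀ (by positivity)] at h2 h3
    rw [dist_pi_lt_iff hr]
    intro x
    have h4 := abs_le_l1 (flowQuotient m z ε t μ - flowQuotient m z ε' t μ) x
    rw [Real.dist_eq]
    simp only [Pi.sub_apply] at h4
    linarith
  classical
  choose! δm hδm using hlim
  refine ⟨δm, d * (L - K), 1, C, hlam, one_pos, hC0, ?_, ?_, ?_⟩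
  · intro t ht μ hμ μ' hμ'
    rw [one_mul]
    exact flow_contraction hd0 hα hm hKL' hlow hK hμ hμ' ht
  · intro t ht μ hμ z x
    refine ((tendsto_pi_nhds.1 (hδm t ht μ hμ z)) x).congr fun ε => ?_
    simp only [flowQuotient, Pi.smul_apply, Pi.sub_apply, smul_eq_mul]
    rw [div_eq_inv_mul]
  · intro t ht μ hμ μ' hμ' z
    have h1 := (continuous_l1.tendsto _).comp ((hδm t ht μ hμ z).sub (hδm t ht μ' hμ' z))
    have h2 : Tendsto (fun ε : ℝ => C * (l1 (μ - μ') + ε + ε)) (𝓝[>] 0)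
        (𝓝 (C * l1 (μ - μ'))) := by
      have := (by fun_prop : Continuous fun ε : ℝ => C * (l1 (μ - μ') + ε + ε)).tendsto 0
      rw [add_zero, add_zero] at this
      exact this.mono_left nhdsWithin_le_nhds
    refine le_of_tendsto_of_tendsto h1 h2 ?_
    filter_upwards [Ioc_mem_nhdsGT (zero_lt_one' ℝ)] with ε hε
    exact hC z μ hμ μ' hμ' ε ε hε.1 hε.2 hε.1 hε.2 t ht
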